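/- Let e, y ∈ ℝ⁴ with ‖e‖ = 1 and y ∉ {0, e}. Then the function (x₁, x₂) ↦ 1/(‖x₁‖²‖x₁ − e‖²‖x₁ − y‖²‖x₁ − x₂‖²‖x₂‖²‖x₂ − e‖²‖x₂ − y‖²) is Lebesgue integrable on ℝ⁴ × ℝ⁴ and (1/π⁴) ∫_{ℝ⁴×ℝ⁴} dx₁ dx₂ / (‖x₁‖²‖x₁ − e‖²‖x₁ − y‖²‖x₁ − x₂‖²‖x₂‖²‖x₂ − e‖²‖x₂ − y‖²) = 6ζ(3)/(‖y‖²‖y − e‖²). -/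

import Mathlib

open MeasureTheory

/-!
Inversion at the external vertex `a` removes the edges at `a`: both internal vertices have degree
four in dimension four, so their conformal factors cancel against the Jacobian. What is left is the
two-point integral over the complete graph on `u, v, x, y` without the edge `uv`; put `u = 0`.

In logarithmic polar coordinates `x = exp a • ω` the propagator `‖exp a • ω - exp b • η‖⁻²` is
`exp (-(a + b)) * exp (-|a - b|) * ∑ n, exp (-n * |a - b|) * U n ⟪ω, η⟫`, where `U n` is the
Chebyshev polynomial of the second kind, the zonal harmonic of degree `n` on the three-sphere.
By Archimedes' theorem the orthogonal projection of the three-sphere to a plane has constant density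
on the unit disc. This yields the convolution identity of the zonal harmonics, by which the triangle
of propagators reduces to a sum over a single degree `n`. The remaining radial integral of
`exp (-(n + 1) * (|c - a| + |a - b| + |c - b|))` over `a` and `b` is `3 / (2 * (n + 1) ^ 2)`; with
the factor `1 / (n + 1)` from the spherical integral the sum over `n` is a multiple of `ζ(3)`.
-/

namespace GraphicalFunction

open Module Polynomial Real Set
open scoped ENNReal Pointwise RealInnerProductSpace

section ChebyshevU

theorem abs_eval_U_le {x : ℝ} (hx : |x| ≤ 1) (n : ℕ) :
    |(Chebyshev.U ℝ n).eval x| ≤ n + 1 := by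
  induction n with
  | zero => simp
  | succ n ih =>
    have hT := Chebyshev.abs_eval_T_real_le_one (n + 1) hx
    calc |(Chebyshev.U ℝ (n + 1 : ℕ)).eval x|
        = |x * (Chebyshev.U ℝ n).eval x + (Chebyshev.T ℝ (n + 1)).eval x| := by
          simp [Chebyshev.U_eq_X_mul_U_add_T]
      _ ≤ |x| * |(Chebyshev.U ℝ n).eval x| + |(Chebyshev.T ℝ (n + 1)).eval x| := by
          rw [← abs_mul]; exact abs_add_le _ _
      _ ≤ 1 * (n + 1) + 1 := by gcongr
      _ = (n + 1 : ℕ) + 1 := by push_cast; ring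

theorem summable_abs_pow_mul_add_one {b : ℝ} (hb : |b| < 1) :
    Summable fun n : ℕ => |b ^ n| * ((n : ℝ) + 1) := by
  have hb' : ‖|b|‖ < 1 := by simpa using hb
  refine ((summable_pow_mul_geometric_of_norm_lt_one 1 hb').add
    (summable_geometric_of_norm_lt_one hb')).congr fun n => ?_
  rw [abs_pow]
  ring

theorem summable_mul_eval_U {f : ℕ → ℝ} (hf : Summable fun n => |f n| * ((n : ℝ) + 1)) {x : ℝ}
    (hx : |x| ≤ 1) : Summable fun n : ℕ => f n * (Chebyshev.U ℝ n).eval x :=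
  hf.of_norm_bounded fun n => by
    rw [norm_mul]
    exact mul_le_mul_of_nonneg_left (abs_eval_U_le hx n) (abs_nonneg _)

theorem one_sub_two_mul_add_sq_pos {b x : ℝ} (hb : |b| < 1) (hx : |x| ≤ 1) :
    0 < 1 - 2 * b * x + b ^ 2 := by
  have hbx : b * x ≤ |b| := calc
    b * x ≤ |b| * |x| := (le_abs_self _).trans (abs_mul b x).le
    _ ≤ |b| := mul_le_of_le_one_right (abs_nonneg b) hx
  nlinarith [sq_abs b, sq_pos_of_pos (sub_pos.2 hb)]

/-- The zonal function `∑ₙ fₙ Uₙ(x)` with coefficients `f`, as a function of the cosine `x` of the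
distance to its pole on the unit sphere of a four-dimensional space. -/
noncomputable def zonal (f : ℕ → ℝ) (x : ℝ) : ℝ := ∑' n : ℕ, f n * (Chebyshev.U ℝ n).eval x

theorem zonal_pow {b x : ℝ} (hb : |b| < 1) (hx : |x| ≤ 1) :
    zonal (b ^ ·) x = (1 - 2 * b * x + b ^ 2)⁻¹ := by
  have hs := summable_mul_eval_U (summable_abs_pow_mul_add_one hb) hx
  have hs' := (summable_nat_add_iff 1).2 hs
  have h₀ := hs.tsum_eq_zero_add
  have h₁ := hs'.tsum_eq_zero_add
  have h₂ : ∑' n : ℕ, b ^ (n + 1 + 1) * (Chebyshev.U ℝ (n + 1 + 1 : ℕ)).eval x =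
      2 * x * b * (∑' n : ℕ, b ^ (n + 1) * (Chebyshev.U ℝ (n + 1 : ℕ)).eval x) -
        b ^ 2 * ∑' n : ℕ, b ^ n * (Chebyshev.U ℝ n).eval x := by
    rw [← tsum_mul_left, ← tsum_mul_left, ← (hs'.mul_left _).tsum_sub (hs.mul_left _)]
    refine tsum_congr fun n => ?_
    have hU : Chebyshev.U ℝ (n + 1 + 1 : ℕ) =
        2 * X * Chebyshev.U ℝ (n + 1 : ℕ) - Chebyshev.U ℝ n := by
      exact_mod_cast Chebyshev.U_add_two ℝ n
    simp only [hU, eval_sub, eval_mul, eval_X, eval_ofNat]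
    ring
  simp only [zero_add, pow_zero, pow_one, one_mul, Nat.cast_zero, Nat.cast_one, Chebyshev.U_zero,
    Chebyshev.U_one, eval_one, eval_mul, eval_X, eval_ofNat] at h₀ h₁
  refine eq_inv_of_mul_eq_one_left ?_
  rw [zonal]
  linear_combination (1 - 2 * x * b) * h₀ + h₁ + h₂

theorem zonal_pow_nonneg {b x : ℝ} (hb : |b| < 1) (hx : |x| ≤ 1) : 0 ≤ zonal (b ^ ·) x :=
  zonal_pow hb hx ▸ (inv_pos.2 (one_sub_two_mul_add_sq_pos hb hx)).le

theorem integral_cos_int_mul {k : ℤ} (hk : k ≠ 0) : ∫ θ in (0 : ℝ)..π, cos (k * θ) = 0 := by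
  simpa [Chebyshev.integral_measureT_eq_integral_cos] using
    Chebyshev.integral_eval_T_real_measureT_of_ne_zero hk

theorem integral_sin_mul_sin (n m : ℕ) :
    ∫ θ in (0 : ℝ)..π, sin ((n + 1) * θ) * sin ((m + 1) * θ) = if n = m then π / 2 else 0 := by
  have hprod (θ : ℝ) : sin ((n + 1) * θ) * sin ((m + 1) * θ) =
      (cos ((n - m : ℤ) * θ) - cos ((n + m + 2 : ℤ) * θ)) / 2 := by
    have hsub : ((n - m : ℤ) : ℝ) * θ = (n + 1) * θ - (m + 1) * θ := by push_cast; ring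
    have hadd : ((n + m + 2 : ℤ) : ℝ) * θ = (n + 1) * θ + (m + 1) * θ := by push_cast; ring
    rw [hsub, hadd, cos_sub, cos_add]
    ring
  simp_rw [hprod]
  rw [intervalIntegral.integral_div, intervalIntegral.integral_sub
    (Continuous.intervalIntegrable (by fun_prop) _ _)
    (Continuous.intervalIntegrable (by fun_prop) _ _),
    integral_cos_int_mul (k := n + m + 2) (by lia)]
  split_ifs with h
  · simp [h]
  · rw [integral_cos_int_mul (k := n - m) (by lia), sub_zero, zero_div]

theorem integral_eval_U_mul_eval_U_mul_sqrt (n m : ℕ) :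
    ∫ x in (-1 : ℝ)..1, (Chebyshev.U ℝ n).eval x * (Chebyshev.U ℝ m).eval x * √(1 - x ^ 2) =
      if n = m then π / 2 else 0 := calc
  _ = ∫ x in (-1 : ℝ)..1, (Chebyshev.U ℝ n).eval x * (Chebyshev.U ℝ m).eval x * (1 - x ^ 2) *
        √(1 - x ^ 2)⁻¹ := by
    congr! 2 with x
    rw [sqrt_inv, ← div_eq_mul_inv, mul_div_assoc, div_sqrt]
  _ = ∫ θ in (0 : ℝ)..π, sin ((n + 1) * θ) * sin ((m + 1) * θ) := by
    rw [← Chebyshev.integral_measureT, Chebyshev.integral_measureT_eq_integral_cos]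
    congr! 2 with θ
    rw [← sin_sq]
    linear_combination (Chebyshev.U ℝ m).eval (cos θ) * sin θ * Chebyshev.U_real_cos θ n +
      sin ((n + 1) * θ) * Chebyshev.U_real_cos θ m
  _ = _ := integral_sin_mul_sin n m

end ChebyshevU

section Disc

theorem integral_eval_U_chord (m : ℕ) (p t : ℝ) :
    ∫ y in (-sin p)..sin p, (Chebyshev.U ℝ m).eval (cos t * cos p + sin t * y) =
      2 / (m + 1) * sin ((m + 1) * p) * (Chebyshev.U ℝ m).eval (cos t) := by
  by_cases hs : sin t = 0
  · have hp := Chebyshev.U_real_cos p m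
    simp only [hs, zero_mul, add_zero, intervalIntegral.integral_const, smul_eq_mul]
    push_cast at hp
    rcases sin_eq_zero_iff_cos_eq.1 hs with h | h <;> rw [h]
    · simp only [sub_neg_eq_add, one_mul, Chebyshev.U_eval_one, Int.cast_natCast]
      field_simp
      linear_combination 2 * hp
    · simp only [sub_neg_eq_add, neg_mul, one_mul, Chebyshev.U_eval_neg,
        Chebyshev.U_eval_one, Int.cast_natCast]
      field_simp
      linear_combination 2 * hp
  · have hderiv (y : ℝ) : HasDerivAt
        (fun y => (Chebyshev.T ℝ (m + 1)).eval (cos t * cos p + sin t * y) / ((m + 1) * sin t))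
        ((Chebyshev.U ℝ m).eval (cos t * cos p + sin t * y)) y := by
      have hline : HasDerivAt (fun y => cos t * cos p + sin t * y) (sin t) y := by
        simpa using ((hasDerivAt_id y).const_mul (sin t)).const_add (cos t * cos p)
      refine ((((Chebyshev.T ℝ (m + 1)).hasDerivAt _).comp y hline).div_const _).congr_deriv ?_
      simp only [Chebyshev.T_derivative_eq_U, Int.cast_add, Int.cast_natCast, Int.cast_one,
        add_sub_cancel_right, eval_mul, eval_add, eval_natCast, eval_one]
      field_simp
    rw [intervalIntegral.integral_eq_sub_of_hasDerivAt (fun y _ => hderiv y)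
      (Continuous.intervalIntegrable (by fun_prop) _ _), mul_neg, ← sub_eq_add_neg, ← cos_sub,
      ← cos_add, Chebyshev.T_real_cos, Chebyshev.T_real_cos, ← sub_div,
      div_eq_iff (by positivity)]
    have hU := Chebyshev.U_real_cos t m
    push_cast at hU ⊢
    rw [mul_sub, mul_add, cos_sub, cos_add]
    field_simp
    linear_combination -2 * sin ((m + 1) * p) * hU

/-- The open Euclidean unit disc, encoded in `ℝ × ℝ` because the norm there is the sup norm. -/
def unitDisc : Set (ℝ × ℝ) := {z | z.1 ^ 2 + z.2 ^ 2 < 1}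

theorem measurableSet_unitDisc : MeasurableSet unitDisc :=
  measurableSet_lt (by fun_prop) (by fun_prop)

theorem isBounded_unitDisc : Bornology.IsBounded unitDisc := by
  refine (Metric.isBounded_closedBall (x := (0 : ℝ × ℝ)) (r := 1)).subset fun z hz => ?_
  rw [unitDisc, mem_ofPred_eq] at hz
  rw [mem_closedBall_zero_iff, Prod.norm_def, sup_le_iff]
  constructor <;> rw [norm_eq_abs, abs_le_one_iff_mul_self_le_one] <;> nlinarith

theorem setIntegral_unitDisc {f : ℝ × ℝ → ℝ} (hf : IntegrableOn f unitDisc) :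
    ∫ z in unitDisc, f z =
      ∫ x in (-1 : ℝ)..1, ∫ y in (-√(1 - x ^ 2))..√(1 - x ^ 2), f (x, y) := by
  have hslice (x : ℝ) : ∫ y, unitDisc.indicator f (x, y) =
      ∫ y in (-√(1 - x ^ 2))..√(1 - x ^ 2), f (x, y) := by
    have hpre : Prod.mk x ⁻¹' unitDisc = Ioo (-√(1 - x ^ 2)) √(1 - x ^ 2) := by
      ext y
      rw [mem_Ioo, ← sq_lt, lt_sub_iff_add_lt']
      rfl
    rw [intervalIntegral.integral_of_le (neg_le_self (sqrt_nonneg _)), integral_Ioc_eq_integral_Ioo,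
      ← integral_indicator measurableSet_Ioo, ← hpre]
    rfl
  rw [← integral_indicator measurableSet_unitDisc, Measure.volume_eq_prod,
    integral_prod _ ((integrable_indicator_iff measurableSet_unitDisc).2 hf),
    intervalIntegral.integral_of_le (by norm_num)]
  simp_rw [hslice]
  refine (setIntegral_eq_integral_of_forall_compl_eq_zero fun x hx => ?_).symm
  have hx' : 1 - x ^ 2 ≤ 0 := by
    by_contra! h
    have := abs_lt.1 ((sq_lt_one_iff_abs_lt_one x).1 (by linarith))
    exact hx ⟨this.1, this.2.le⟩
  simp [sqrt_eq_zero_of_nonpos hx']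

theorem integral_eval_U_mul_eval_U_unitDisc (n m : ℕ) (t : ℝ) :
    ∫ z in unitDisc,
        (Chebyshev.U ℝ n).eval z.1 * (Chebyshev.U ℝ m).eval (cos t * z.1 + sin t * z.2) =
      if n = m then π / (n + 1) * (Chebyshev.U ℝ n).eval (cos t) else 0 := by
  have hcont : Continuous fun z : ℝ × ℝ =>
      (Chebyshev.U ℝ n).eval z.1 * (Chebyshev.U ℝ m).eval (cos t * z.1 + sin t * z.2) := by
    fun_prop
  have hchord {x : ℝ} (hx : x ∈ uIcc (-1) 1) :
      ∫ y in (-√(1 - x ^ 2))..√(1 - x ^ 2),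
        (Chebyshev.U ℝ n).eval x * (Chebyshev.U ℝ m).eval (cos t * x + sin t * y) =
      2 / (m + 1) * (Chebyshev.U ℝ m).eval (cos t) *
        ((Chebyshev.U ℝ n).eval x * (Chebyshev.U ℝ m).eval x * √(1 - x ^ 2)) := by
    rw [uIcc_of_le (by norm_num)] at hx
    have hU := Chebyshev.U_real_cos (arccos x) m
    have h := integral_eval_U_chord m (arccos x) t
    push_cast at hU
    rw [← hU, sin_arccos, cos_arccos hx.1 hx.2] at h
    rw [intervalIntegral.integral_const_mul, h]
    ring
  rw [setIntegral_unitDisc ((hcont.continuousOn.integrableOn_compact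
    isBounded_unitDisc.isCompact_closure).mono_set subset_closure),
    intervalIntegral.integral_congr fun x hx => hchord hx, intervalIntegral.integral_const_mul,
    integral_eval_U_mul_eval_U_mul_sqrt]
  split_ifs with h
  · subst h
    ring
  · simp

end Disc

section Archimedes

theorem lintegral_comp_sq_Ioi {g : ℝ → ℝ≥0∞} :
    ∫⁻ r in Ioi (0 : ℝ), ENNReal.ofReal r * g (r ^ 2) = 2⁻¹ * ∫⁻ s in Ioi (0 : ℝ), g s := by
  have himage : (fun r : ℝ => r ^ 2) '' Ioi 0 = Ioi 0 := by
    ext s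
    refine ⟨fun ⟨r, hr, hrs⟩ => ?_, fun hs => ⟨√s, sqrt_pos.2 hs, sq_sqrt (le_of_lt hs)⟩⟩
    rw [← hrs]
    exact pow_pos (mem_Ioi.1 hr) 2
  have hinj : InjOn (fun r : ℝ => r ^ 2) (Ioi 0) := fun r hr s hs h =>
    (pow_left_inj₀ (le_of_lt hr) (le_of_lt hs) two_ne_zero).1 h
  have hsubst := lintegral_image_eq_lintegral_abs_deriv_mul measurableSet_Ioi
    (fun r _ => (hasDerivAt_pow 2 r).hasDerivWithinAt) hinj g
  rw [himage] at hsubst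
  rw [hsubst, ← lintegral_const_mul' _ _ (by simp)]
  refine setLIntegral_congr_fun measurableSet_Ioi fun r hr => ?_
  rw [← mul_assoc]
  congr 1
  rw [← ENNReal.ofReal_ofNat, ← ENNReal.ofReal_inv_of_pos two_pos,
    ← ENNReal.ofReal_mul (by norm_num), abs_of_nonneg (by simpa using le_of_lt hr)]
  simp

theorem lintegral_comp_sq_add_sq {g : ℝ → ℝ≥0∞} (hg : Measurable g) :
    ∫⁻ w : ℝ × ℝ, g (w.1 ^ 2 + w.2 ^ 2) = ENNReal.ofReal π * ∫⁻ s in Ioi (0 : ℝ), g s := by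
  have hpolar (r : ℝ × ℝ) : ENNReal.ofReal r.1 •
      g ((polarCoord.symm r).1 ^ 2 + (polarCoord.symm r).2 ^ 2) =
        ENNReal.ofReal r.1 * g (r.1 ^ 2) := by
    rw [smul_eq_mul]
    congr 2
    simp only [polarCoord_symm_apply]
    linear_combination r.1 ^ 2 * sin_sq_add_cos_sq r.2
  rw [← lintegral_comp_polarCoord_symm, polarCoord_target, Measure.volume_eq_prod,
    ← Measure.prod_restrict]
  simp_rw [hpolar]
  rw [lintegral_prod _ (by fun_prop)]
  simp_rw [setLIntegral_const, volume_Ioo]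
  rw [lintegral_mul_const _ (by fun_prop), lintegral_comp_sq_Ioi, mul_right_comm]
  congr 1
  rw [← ENNReal.ofReal_ofNat, ← ENNReal.ofReal_inv_of_pos two_pos,
    ← ENNReal.ofReal_mul (by norm_num)]
  ring_nf

/-- The part `{(z, s) : 0 < s < 1, s^(-1/2) z ∈ B}` of the paraboloid over `B`, the image of a cone
of the unit ball under `x ↦ ((⟪p, x⟫, ⟪v, x⟫), ‖x‖²)`. -/
def parabolicCone (B : Set (ℝ × ℝ)) : Set ((ℝ × ℝ) × ℝ) :=
  {zs | zs.2 ∈ Ioo 0 1 ∧ (√zs.2)⁻¹ • zs.1 ∈ B}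

theorem measurableSet_parabolicCone {B : Set (ℝ × ℝ)} (hB : MeasurableSet B) :
    MeasurableSet (parabolicCone B) :=
  (measurable_snd measurableSet_Ioo).inter
    (hB.preimage (f := fun zs : (ℝ × ℝ) × ℝ => (√zs.2)⁻¹ • zs.1) (by fun_prop))

theorem parabolicCone_inter_setOf_lt (B : Set (ℝ × ℝ)) :
    parabolicCone B ∩ {zs | zs.1.1 ^ 2 + zs.1.2 ^ 2 < zs.2} = parabolicCone (B ∩ unitDisc) := by
  ext ⟨z, s⟩
  simp only [parabolicCone, unitDisc, mem_inter_iff, mem_ofPred_eq, and_assoc]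
  refine and_congr_right fun hs => and_congr_right fun _ => ?_
  simp only [Prod.smul_fst, Prod.smul_snd, smul_eq_mul, mul_pow, inv_pow, sq_sqrt hs.1.le,
    ← mul_add]
  rw [inv_mul_lt_one₀ hs.1]

theorem volume_parabolicCone {B : Set (ℝ × ℝ)} (hB : MeasurableSet B) :
    volume (parabolicCone B) = 2⁻¹ * volume B := by
  have hslice (s : ℝ) : volume ((fun z => (z, s)) ⁻¹' parabolicCone B) =
      (Ioo 0 1).indicator (fun s => ENNReal.ofReal s * volume B) s := by
    by_cases hs : s ∈ Ioo (0 : ℝ) 1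
    · have hpre : (fun z => (z, s)) ⁻¹' parabolicCone B = ((√s)⁻¹ • ·) ⁻¹' B := by
        ext z
        exact and_iff_right hs
      rw [hpre, Measure.addHaar_preimage_smul _ (inv_ne_zero (sqrt_pos.2 hs.1).ne'),
        indicator_of_mem hs]
      simp [sq_sqrt hs.1.le, abs_of_pos hs.1]
    · have hpre : (fun z => (z, s)) ⁻¹' parabolicCone B = ∅ :=
        eq_empty_of_forall_notMem fun z hz => hs hz.1
      rw [hpre, measure_empty, indicator_of_notMem hs]
  have hint : ∫⁻ s in Ioo (0 : ℝ) 1, ENNReal.ofReal s = 2⁻¹ := by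
    rw [setLIntegral_congr Ioo_ae_eq_Ioc, ← ofReal_integral_eq_lintegral_ofReal
      (intervalIntegral.intervalIntegrable_id (a := 0) (b := 1)).1
      ((ae_restrict_iff' measurableSet_Ioc).2 (.of_forall fun s hs => hs.1.le)),
      ← intervalIntegral.integral_of_le zero_le_one, integral_id]
    simp
  rw [Measure.volume_eq_prod, Measure.prod_apply_symm (measurableSet_parabolicCone hB)]
  simp_rw [hslice]
  rw [lintegral_indicator measurableSet_Ioo, lintegral_mul_const _ (by fun_prop), hint]

variable {E : Type*} [NormedAddCommGroup E] [InnerProductSpace ℝ E]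

theorem Ioo_smul_image_preimage_inner (p v : E) (A : Set (ℝ × ℝ)) :
    Ioo (0 : ℝ) 1 • (Subtype.val ''
        ((fun ω : Metric.sphere (0 : E) 1 => (⟪p, (ω : E)⟫, ⟪v, (ω : E)⟫)) ⁻¹' A)) =
      (fun x => ((⟪p, x⟫, ⟪v, x⟫), ‖x‖ ^ 2)) ⁻¹' parabolicCone A := by
  ext x
  constructor
  · rintro ⟨r, hr, _, ⟨ω, hω, rfl⟩, rfl⟩
    have hnorm : ‖r • (ω : E)‖ = r := by simp [norm_smul, abs_of_pos hr.1]
    refine ⟨⟨by simpa [hnorm] using pow_pos hr.1 2, ?_⟩, ?_⟩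
    · simpa [hnorm] using pow_lt_one₀ hr.1.le hr.2 two_ne_zero
    · simpa [hnorm, sqrt_sq hr.1.le, real_inner_smul_right, hr.1.ne'] using hω
  · rintro ⟨⟨hx₀, hx₁⟩, hxA⟩
    have hx : 0 < ‖x‖ := by simpa [sq_pos_iff] using hx₀
    refine ⟨‖x‖, ⟨hx, by simpa using hx₁⟩, ‖x‖⁻¹ • x,
      ⟨⟨‖x‖⁻¹ • x, by simp [norm_smul, hx.ne']⟩, ?_, rfl⟩, by simp [hx.ne']⟩
    simpa [real_inner_smul_right] using hxA

variable [FiniteDimensional ℝ E] [MeasurableSpace E] [BorelSpace E]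

theorem exists_measurePreserving_prod (hE : finrank ℝ E = 4) {p v : E}
    (hpv : Orthonormal ℝ ![p, v]) :
    ∃ φ : E → (ℝ × ℝ) × (ℝ × ℝ), MeasurePreserving φ ∧ ∀ x, (φ x).1 = (⟪p, x⟫, ⟪v, x⟫) ∧
      ‖x‖ ^ 2 = (φ x).1.1 ^ 2 + (φ x).1.2 ^ 2 + ((φ x).2.1 ^ 2 + (φ x).2.2 ^ 2) := by
  have hrestrict : Orthonormal ℝ
      ((range Sum.inl).domRestrict (Sum.elim ![p, v] ![p, v] : Fin 2 ⊕ Fin 2 → E)) := by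
    constructor
    · rintro ⟨_, i, rfl⟩
      exact hpv.1 i
    · rintro ⟨_, i, rfl⟩ ⟨_, j, rfl⟩ hij
      exact hpv.2 fun h => hij (by rw [h])
  obtain ⟨b, hb⟩ := hrestrict.exists_orthonormalBasis_extension_of_card_eq (by simp [hE])
  refine ⟨_, ((volume_preserving_finTwoArrow ℝ).prod (volume_preserving_finTwoArrow ℝ)).comp
    ((volume_measurePreserving_sumPiEquivProdPi fun _ : Fin 2 ⊕ Fin 2 => ℝ).comp
      ((PiLp.volume_preserving_ofLp _).comp b.measurePreserving_repr)), fun x => ⟨?_, ?_⟩⟩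
  · have h₀ := hb (.inl 0) (mem_range_self _)
    have h₁ := hb (.inl 1) (mem_range_self _)
    simp_all [MeasurableEquiv.sumPiEquivProdPi, b.repr_apply_apply]
  · simp [← b.sum_sq_norm_inner_right x, MeasurableEquiv.sumPiEquivProdPi, b.repr_apply_apply]

theorem map_inner_norm_sq_volume (hE : finrank ℝ E = 4) {p v : E}
    (hpv : Orthonormal ℝ ![p, v]) :
    (volume : Measure E).map (fun x => ((⟪p, x⟫, ⟪v, x⟫), ‖x‖ ^ 2)) =
      ENNReal.ofReal π •
        volume.restrict {zs : (ℝ × ℝ) × ℝ | zs.1.1 ^ 2 + zs.1.2 ^ 2 < zs.2} := by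
  obtain ⟨φ, hφ, hφx⟩ := exists_measurePreserving_prod hE hpv
  refine Measure.ext_of_lintegral _ fun f hf => ?_
  have hset : MeasurableSet {zs : (ℝ × ℝ) × ℝ | zs.1.1 ^ 2 + zs.1.2 ^ 2 < zs.2} :=
    measurableSet_lt (by fun_prop) (by fun_prop)
  have hradial (z : ℝ × ℝ) : ∫⁻ w : ℝ × ℝ, f (z, z.1 ^ 2 + z.2 ^ 2 + (w.1 ^ 2 + w.2 ^ 2)) =
      ENNReal.ofReal π * ∫⁻ s in Ioi (z.1 ^ 2 + z.2 ^ 2), f (z, s) := by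
    rw [lintegral_comp_sq_add_sq (g := fun s => f (z, z.1 ^ 2 + z.2 ^ 2 + s)) (by fun_prop),
      ← lintegral_indicator measurableSet_Ioi, ← lintegral_indicator measurableSet_Ioi,
      ← lintegral_add_left_eq_self ((Ioi (z.1 ^ 2 + z.2 ^ 2)).indicator _) (z.1 ^ 2 + z.2 ^ 2)]
    simp [indicator]
  rw [lintegral_map hf (by fun_prop), lintegral_smul_measure, smul_eq_mul,
    ← lintegral_indicator hset, Measure.volume_eq_prod,
    lintegral_prod _ (hf.indicator hset).aemeasurable, ← lintegral_const_mul _ (by fun_prop)]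
  calc ∫⁻ x, f ((⟪p, x⟫, ⟪v, x⟫), ‖x‖ ^ 2)
      = ∫⁻ x, f ((φ x).1, (φ x).1.1 ^ 2 + (φ x).1.2 ^ 2 + ((φ x).2.1 ^ 2 + (φ x).2.2 ^ 2)) := by
        simp_rw [← (hφx _).1, ← (hφx _).2]
    _ = ∫⁻ z : ℝ × ℝ, ∫⁻ w : ℝ × ℝ, f (z, z.1 ^ 2 + z.2 ^ 2 + (w.1 ^ 2 + w.2 ^ 2)) := by
        rw [hφ.lintegral_comp (f := fun u => f (u.1, u.1.1 ^ 2 + u.1.2 ^ 2 +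
          (u.2.1 ^ 2 + u.2.2 ^ 2))) (by fun_prop), Measure.volume_eq_prod,
          lintegral_prod _ (by fun_prop)]
    _ = _ := by
        refine lintegral_congr fun z => ?_
        rw [hradial, ← lintegral_indicator measurableSet_Ioi]
        rfl

-- Archimedes' hat-box theorem, one dimension up.
theorem map_inner_toSphere (hE : finrank ℝ E = 4) {p v : E} (hpv : Orthonormal ℝ ![p, v]) :
    (volume : Measure E).toSphere.map
        (fun ω : Metric.sphere (0 : E) 1 => (⟪p, (ω : E)⟫, ⟪v, (ω : E)⟫)) =
      ENNReal.ofReal (2 * π) • volume.restrict unitDisc := by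
  refine Measure.ext fun A hA => ?_
  have hconst : 4 * (ENNReal.ofReal π * 2⁻¹) = ENNReal.ofReal (2 * π) := by
    rw [← ENNReal.ofReal_ofNat 2, ← ENNReal.ofReal_ofNat 4, ← ENNReal.ofReal_inv_of_pos two_pos,
      ← ENNReal.ofReal_mul (by positivity), ← ENNReal.ofReal_mul (by positivity)]
    ring_nf
  rw [Measure.map_apply (by fun_prop) hA, Measure.toSphere_apply' _ (hA.preimage (by fun_prop)),
    Ioo_smul_image_preimage_inner,
    ← Measure.map_apply (by fun_prop) (measurableSet_parabolicCone hA),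
    map_inner_norm_sq_volume hE hpv, hE, Measure.smul_apply, Measure.smul_apply,
    Measure.restrict_apply (measurableSet_parabolicCone hA), Measure.restrict_apply hA,
    parabolicCone_inter_setOf_lt, volume_parabolicCone (hA.inter measurableSet_unitDisc),
    smul_eq_mul, smul_eq_mul, ← hconst]
  push_cast
  ring

end Archimedes

section Sphere

variable {E : Type*} [NormedAddCommGroup E] [InnerProductSpace ℝ E]

theorem abs_inner_le_one {p q : E} (hp : ‖p‖ = 1) (hq : ‖q‖ = 1) : |⟪p, q⟫| ≤ 1 := by
  simpa [hp, hq] using abs_real_inner_le_norm p q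

theorem exists_eq_cos_smul_add_sin_smul (hE : 2 ≤ finrank ℝ E) {p q : E} (hp : ‖p‖ = 1)
    (hq : ‖q‖ = 1) : ∃ (t : ℝ) (v : E), Orthonormal ℝ ![p, v] ∧ q = cos t • p + sin t • v := by
  have := FiniteDimensional.of_finrank_pos (by omega : 0 < finrank ℝ E)
  set w : E := q - ⟪p, q⟫ • p with hw
  have hpw : ⟪p, w⟫ = 0 := by simp [hw, inner_sub_right, inner_smul_right, hp]
  have hw_norm : ‖w‖ ^ 2 = 1 - ⟪p, q⟫ ^ 2 := by
    rw [hw, norm_sub_sq_real, inner_smul_right, norm_smul, real_inner_comm, hp, hq, norm_eq_abs,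
      mul_one, sq_abs]
    ring
  obtain ⟨v, hv, hpv, hwv⟩ : ∃ v : E, ‖v‖ = 1 ∧ ⟪p, v⟫ = 0 ∧ w = ‖w‖ • v := by
    by_cases hw0 : w = 0
    · have hspan : finrank ℝ (ℝ ∙ p) = 1 := finrank_span_singleton (by rintro rfl; simp at hp)
      have : Nontrivial (ℝ ∙ p)ᗮ := by
        have := (ℝ ∙ p).finrank_add_finrank_orthogonal
        exact nontrivial_of_finrank_pos (R := ℝ) (by omega)
      obtain ⟨v, hv⟩ := exists_norm_eq (ℝ ∙ p)ᗮ zero_le_one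
      exact ⟨v, hv, Submodule.mem_orthogonal_singleton_iff_inner_right.1 v.2, by simp [hw0]⟩
    · exact ⟨‖w‖⁻¹ • w, norm_smul_inv_norm hw0, by simp [inner_smul_right, hpw],
        (smul_inv_smul₀ (norm_ne_zero_iff.2 hw0) w).symm⟩
  obtain ⟨hlb, hub⟩ := abs_le.1 (abs_inner_le_one hp hq)
  refine ⟨arccos ⟪p, q⟫, v, ?_, ?_⟩
  · simp [orthonormal_vecCons_iff, hp, hv, hpv]
  · rw [cos_arccos hlb hub, sin_arccos, ← hw_norm, sqrt_sq (norm_nonneg w), ← hwv]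
    simp [hw]

theorem continuous_zonal_inner {f : ℕ → ℝ} (hf : Summable fun n => |f n| * ((n : ℝ) + 1)) {p : E}
    (hp : ‖p‖ = 1) : Continuous fun ω : Metric.sphere (0 : E) 1 => zonal f ⟪p, (ω : E)⟫ := by
  refine continuous_tsum (fun n => by fun_prop) hf fun n ω => ?_
  rw [norm_mul, norm_eq_abs, norm_eq_abs]
  gcongr
  exact abs_eval_U_le (abs_inner_le_one hp (norm_eq_of_mem_sphere ω)) n

variable [FiniteDimensional ℝ E] [MeasurableSpace E] [BorelSpace E]

theorem integral_eval_U_inner_mul_eval_U_inner (hE : finrank ℝ E = 4) {p q : E} (hp : ‖p‖ = 1)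
    (hq : ‖q‖ = 1) (n m : ℕ) :
    ∫ ω : Metric.sphere (0 : E) 1, (Chebyshev.U ℝ n).eval ⟪p, (ω : E)⟫ *
        (Chebyshev.U ℝ m).eval ⟪q, (ω : E)⟫ ∂(volume : Measure E).toSphere =
      if n = m then 2 * π ^ 2 / (n + 1) * (Chebyshev.U ℝ n).eval ⟪p, q⟫ else 0 := by
  obtain ⟨t, v, hpv, rfl⟩ := exists_eq_cos_smul_add_sin_smul (by omega) hp hq
  have hpv0 : ⟪p, v⟫ = 0 := by simpa using hpv.2 (show (0 : Fin 2) ≠ 1 by decide)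
  have hmap := integral_map (μ := (volume : Measure E).toSphere)
    (φ := fun ω : Metric.sphere (0 : E) 1 => (⟪p, (ω : E)⟫, ⟪v, (ω : E)⟫)) (by fun_prop)
    (f := fun z : ℝ × ℝ => (Chebyshev.U ℝ n).eval z.1 *
      (Chebyshev.U ℝ m).eval (cos t * z.1 + sin t * z.2)) (by fun_prop)
  simp only [inner_add_left, inner_smul_left, inner_add_right, inner_smul_right,
    RCLike.conj_to_real, hpv0, mul_zero, add_zero, real_inner_self_eq_norm_sq, hp]
  rw [← hmap, map_inner_toSphere hE hpv, integral_smul_measure,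
    integral_eval_U_mul_eval_U_unitDisc, ENNReal.toReal_ofReal (by positivity)]
  split_ifs
  · simp only [smul_eq_mul, one_pow, mul_one]
    ring
  · simp

theorem hasSum_integral_zonal_inner_mul {f : ℕ → ℝ} (hf : Summable fun n => |f n| * ((n : ℝ) + 1))
    {g : Metric.sphere (0 : E) 1 → ℝ} (hg : Integrable g (volume : Measure E).toSphere) {p : E}
    (hp : ‖p‖ = 1) :
    HasSum (fun n => f n * ∫ ω : Metric.sphere (0 : E) 1, (Chebyshev.U ℝ n).eval ⟪p, (ω : E)⟫ * g ω
        ∂(volume : Measure E).toSphere)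
      (∫ ω : Metric.sphere (0 : E) 1, zonal f ⟪p, (ω : E)⟫ * g ω
        ∂(volume : Measure E).toSphere) := by
  have hpω (ω : Metric.sphere (0 : E) 1) : |⟪p, (ω : E)⟫| ≤ 1 :=
    abs_inner_le_one hp (norm_eq_of_mem_sphere ω)
  simp_rw [← integral_const_mul, ← mul_assoc]
  refine hasSum_integral_of_dominated_convergence
    (fun n ω => |f n| * ((n : ℝ) + 1) * |g ω|) (fun n => ?_) (fun n => ?_) ?_ ?_ ?_
  · exact AEStronglyMeasurable.mul (by fun_prop) hg.1
  · refine ae_of_all _ fun ω => ?_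
    rw [norm_mul, norm_mul, norm_eq_abs, norm_eq_abs, norm_eq_abs]
    gcongr
    exact abs_eval_U_le (hpω ω) n
  · exact ae_of_all _ fun ω => hf.mul_right _
  · simp_rw [tsum_mul_right]
    exact hg.abs.const_mul _
  · exact ae_of_all _ fun ω => (summable_mul_eval_U hf (hpω ω)).hasSum.mul_right _

-- The Funk–Hecke formula.
theorem integral_zonal_inner_mul_eval_U_inner (hE : finrank ℝ E = 4) {f : ℕ → ℝ}
    (hf : Summable fun n => |f n| * ((n : ℝ) + 1)) {p q : E} (hp : ‖p‖ = 1) (hq : ‖q‖ = 1)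
    (m : ℕ) :
    ∫ ω : Metric.sphere (0 : E) 1, zonal f ⟪p, (ω : E)⟫ * (Chebyshev.U ℝ m).eval ⟪q, (ω : E)⟫
        ∂(volume : Measure E).toSphere =
      2 * π ^ 2 * f m / (m + 1) * (Chebyshev.U ℝ m).eval ⟪p, q⟫ := by
  have hU : Continuous fun ω : Metric.sphere (0 : E) 1 =>
      (Chebyshev.U ℝ m).eval ⟪q, (ω : E)⟫ := by fun_prop
  have hsum := hasSum_integral_zonal_inner_mul hf
    (hU.integrable_of_hasCompactSupport (.of_compactSpace _)) hp
  simp only [integral_eval_U_inner_mul_eval_U_inner hE hp hq] at hsum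
  rw [hsum.unique (hasSum_single m fun n hn => by simp [hn]), if_pos rfl]
  ring

theorem lintegral_ofReal_toSphere {f : Metric.sphere (0 : E) 1 → ℝ} (hf : Continuous f)
    (hf₀ : ∀ ω, 0 ≤ f ω) : ∫⁻ ω, ENNReal.ofReal (f ω) ∂(volume : Measure E).toSphere =
      ENNReal.ofReal (∫ ω, f ω ∂(volume : Measure E).toSphere) :=
  (ofReal_integral_eq_lintegral_ofReal
    (hf.integrable_of_hasCompactSupport (.of_compactSpace _)) (ae_of_all _ hf₀)).symm

theorem integral_zonal_inner_mul_zonal_inner (hE : finrank ℝ E = 4) {f g : ℕ → ℝ}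
    (hf : Summable fun n => |f n| * ((n : ℝ) + 1)) (hg : Summable fun n => |g n| * ((n : ℝ) + 1))
    {p q : E} (hp : ‖p‖ = 1) (hq : ‖q‖ = 1) :
    ∫ ω : Metric.sphere (0 : E) 1, zonal f ⟪p, (ω : E)⟫ * zonal g ⟪q, (ω : E)⟫
        ∂(volume : Measure E).toSphere =
      zonal (fun n => 2 * π ^ 2 * f n * g n / (n + 1)) ⟪p, q⟫ := by
  have hsum := hasSum_integral_zonal_inner_mul hf
    ((continuous_zonal_inner hg hq).integrable_of_hasCompactSupport (.of_compactSpace _)) hp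
  rw [zonal, ← hsum.tsum_eq]
  refine tsum_congr fun n => ?_
  simp_rw [mul_comm (eval _ _) (zonal g _)]
  rw [integral_zonal_inner_mul_eval_U_inner hE hg hq hp, real_inner_comm]
  ring

theorem summable_abs_zonal_convolution_pow {b c : ℝ} (hb : |b| < 1) (hc : |c| < 1) :
    Summable fun n : ℕ => |2 * π ^ 2 * b ^ n * c ^ n / (n + 1)| * ((n : ℝ) + 1) := by
  have hbc : |b * c| < 1 := by
    rw [abs_mul]
    exact mul_lt_one_of_nonneg_of_lt_one_left (abs_nonneg b) hb hc.le
  refine ((summable_geometric_of_abs_lt_one hbc).abs.mul_left (2 * π ^ 2)).congr fun n => ?_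
  rw [abs_div, abs_of_pos (n.cast_add_one_pos : (0 : ℝ) < n + 1),
    div_mul_cancel₀ _ n.cast_add_one_ne_zero, mul_assoc _ (b ^ n), ← mul_pow, abs_mul,
    abs_of_pos (by positivity : 0 < 2 * π ^ 2)]

theorem integral_zonal_pow_triangle (hE : finrank ℝ E = 4) {a b c : ℝ}
    (ha : |a| < 1) (hb : |b| < 1) (hc : |c| < 1) {p : E} (hp : ‖p‖ = 1) :
    ∫ ω : Metric.sphere (0 : E) 1, zonal (a ^ ·) ⟪p, (ω : E)⟫ *
        ∫ η : Metric.sphere (0 : E) 1, zonal (b ^ ·) ⟪(ω : E), (η : E)⟫ *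
          zonal (c ^ ·) ⟪p, (η : E)⟫
        ∂(volume : Measure E).toSphere ∂(volume : Measure E).toSphere =
      4 * π ^ 4 * ∑' n : ℕ, (a * b * c) ^ n / (n + 1) := by
  have hinner (ω : Metric.sphere (0 : E) 1) := integral_zonal_inner_mul_zonal_inner hE
    (summable_abs_pow_mul_add_one hb) (summable_abs_pow_mul_add_one hc)
    (norm_eq_of_mem_sphere ω) hp
  simp_rw [hinner, fun ω : Metric.sphere (0 : E) 1 => real_inner_comm p (ω : E)]
  rw [integral_zonal_inner_mul_zonal_inner hE (summable_abs_pow_mul_add_one ha)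
    (summable_abs_zonal_convolution_pow hb hc) hp hp, zonal, real_inner_self_eq_norm_sq, hp,
    one_pow, ← tsum_mul_left]
  refine tsum_congr fun n => ?_
  rw [Chebyshev.U_eval_one]
  push_cast
  field_simp
  ring

theorem lintegral_zonal_pow_triangle (hE : finrank ℝ E = 4) {a b c : ℝ}
    (ha : |a| < 1) (hb : |b| < 1) (hc : |c| < 1) {p : E} (hp : ‖p‖ = 1) :
    ∫⁻ ω : Metric.sphere (0 : E) 1, ∫⁻ η : Metric.sphere (0 : E) 1,
        ENNReal.ofReal (zonal (a ^ ·) ⟪p, (ω : E)⟫ *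
          (zonal (b ^ ·) ⟪(ω : E), (η : E)⟫ * zonal (c ^ ·) ⟪p, (η : E)⟫))
        ∂(volume : Measure E).toSphere ∂(volume : Measure E).toSphere =
      ENNReal.ofReal (4 * π ^ 4 * ∑' n : ℕ, (a * b * c) ^ n / (n + 1)) := by
  have hcont {d : ℝ} (hd : |d| < 1) {q : E} (hq : ‖q‖ = 1) :
      Continuous fun ω : Metric.sphere (0 : E) 1 => zonal (d ^ ·) ⟪q, (ω : E)⟫ :=
    continuous_zonal_inner (summable_abs_pow_mul_add_one hd) hq
  have hnonneg {d : ℝ} (hd : |d| < 1) {q : E} (hq : ‖q‖ = 1) (ω : Metric.sphere (0 : E) 1) :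
      0 ≤ zonal (d ^ ·) ⟪q, (ω : E)⟫ :=
    zonal_pow_nonneg hd (abs_inner_le_one hq (norm_eq_of_mem_sphere ω))
  have hprod_nonneg (ω η : Metric.sphere (0 : E) 1) :
      0 ≤ zonal (b ^ ·) ⟪(ω : E), (η : E)⟫ * zonal (c ^ ·) ⟪p, (η : E)⟫ :=
    mul_nonneg (hnonneg hb (norm_eq_of_mem_sphere ω) η) (hnonneg hc hp η)
  have hinner (ω : Metric.sphere (0 : E) 1) := integral_zonal_inner_mul_zonal_inner hE
    (summable_abs_pow_mul_add_one hb) (summable_abs_pow_mul_add_one hc)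
    (norm_eq_of_mem_sphere ω) hp
  rw [← integral_zonal_pow_triangle hE ha hb hc hp, ← lintegral_ofReal_toSphere]
  · refine lintegral_congr fun ω => ?_
    rw [← integral_const_mul, lintegral_ofReal_toSphere]
    · exact ((hcont hb (norm_eq_of_mem_sphere ω)).mul (hcont hc hp)).const_mul _
    · exact fun η => mul_nonneg (hnonneg ha hp ω) (hprod_nonneg ω η)
  · simp_rw [hinner, fun ω : Metric.sphere (0 : E) 1 => real_inner_comm p (ω : E)]
    exact (hcont ha hp).mul
      (continuous_zonal_inner (summable_abs_zonal_convolution_pow hb hc) hp)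
  · exact fun ω => mul_nonneg (hnonneg ha hp ω) (integral_nonneg (hprod_nonneg ω))

end Sphere

section ExpTriangle

theorem lintegral_comp_abs (f : ℝ → ℝ≥0∞) : ∫⁻ x, f |x| = 2 * ∫⁻ x in Ioi 0, f x := by
  have hpos : ∫⁻ x in Ioi 0, f |x| = ∫⁻ x in Ioi 0, f x :=
    setLIntegral_congr_fun measurableSet_Ioi fun x hx => by rw [abs_of_pos hx]
  have hneg : ∫⁻ x in Iic 0, f |x| = ∫⁻ x in Ioi 0, f x := by
    rw [setLIntegral_congr Iio_ae_eq_Iic.symm, ← hpos,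
      ← (Measure.measurePreserving_neg volume).setLIntegral_comp_preimage_emb
        (MeasurableEquiv.neg ℝ).measurableEmbedding _ (Ioi 0)]
    simp only [neg_preimage, neg_Ioi, neg_zero, abs_neg]
  rw [← lintegral_add_compl _ measurableSet_Iic, compl_Iic, hneg, hpos, two_mul]

theorem lintegral_Ioi_of_hasDerivAt_of_nonneg {g g' : ℝ → ℝ} {c l : ℝ}
    (hderiv : ∀ x ∈ Ici c, HasDerivAt g (g' x) x) (hpos : ∀ x ∈ Ioi c, 0 ≤ g' x)
    (hg : Filter.Tendsto g Filter.atTop (nhds l)) :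
    ∫⁻ x in Ioi c, ENNReal.ofReal (g' x) = ENNReal.ofReal (l - g c) := by
  rw [← integral_Ioi_of_hasDerivAt_of_nonneg' hderiv hpos hg,
    ofReal_integral_eq_lintegral_ofReal (integrableOn_Ioi_deriv_of_nonneg' hderiv hpos hg)]
  exact ae_restrict_of_forall_mem measurableSet_Ioi hpos

variable {N : ℝ}

theorem lintegral_exp_mul_Iic (hN : 0 < N) (c : ℝ) :
    ∫⁻ x in Iic c, ENNReal.ofReal (exp (N * x)) = ENNReal.ofReal (exp (N * c) / N) := by
  rw [← integral_exp_mul_Iic hN, ofReal_integral_eq_lintegral_ofReal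
    (integrableOn_exp_mul_Iic hN c) (ae_of_all _ fun x => exp_nonneg _)]

theorem lintegral_exp_neg_mul_Ioi (hN : 0 < N) (c : ℝ) :
    ∫⁻ x in Ioi c, ENNReal.ofReal (exp (-N * x)) = ENNReal.ofReal (exp (-N * c) / N) := by
  rw [← neg_div_neg_eq, ← integral_exp_mul_Ioi (neg_lt_zero.2 hN),
    ofReal_integral_eq_lintegral_ofReal (integrableOn_exp_mul_Ioi (neg_lt_zero.2 hN) c)
    (ae_of_all _ fun x => exp_nonneg _)]

theorem lintegral_exp_neg_mul_abs_sub_add_abs (hN : 0 < N) (a : ℝ) :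
    ∫⁻ b : ℝ, ENNReal.ofReal (exp (-N * (|a - b| + |b|))) =
      ENNReal.ofReal (exp (-N * |a|) * (|a| + 1 / N)) := by
  wlog ha : 0 ≤ a generalizing a
  · rw [← abs_neg, ← this (-a) (by linarith), ← lintegral_neg_eq_self]
    simp_rw [abs_neg, ← neg_add', abs_neg, sub_neg_eq_add]
  have hleft : ∫⁻ b in Iic 0, ENNReal.ofReal (exp (-N * (|a - b| + |b|))) =
      ENNReal.ofReal (exp (-N * a)) * ENNReal.ofReal (1 / (2 * N)) := by
    have hexp := lintegral_exp_mul_Iic (by positivity : 0 < 2 * N) 0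
    rw [mul_zero, exp_zero] at hexp
    rw [← hexp, ← lintegral_const_mul' _ _ ENNReal.ofReal_ne_top]
    refine setLIntegral_congr_fun measurableSet_Iic fun b (hb : b ≤ 0) => ?_
    rw [← ENNReal.ofReal_mul (exp_nonneg _), ← exp_add, abs_of_nonpos hb,
      abs_of_nonneg (by linarith)]
    ring_nf
  have hmid : ∫⁻ b in Ioc 0 a, ENNReal.ofReal (exp (-N * (|a - b| + |b|))) =
      ENNReal.ofReal (exp (-N * a)) * ENNReal.ofReal a := by
    rw [← sub_zero a, ← Real.volume_Ioc, ← setLIntegral_const, sub_zero]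
    refine setLIntegral_congr_fun measurableSet_Ioc fun b hb => ?_
    rw [abs_of_nonneg hb.1.le, abs_of_nonneg (sub_nonneg.2 hb.2), sub_add_cancel]
  have hright : ∫⁻ b in Ioi a, ENNReal.ofReal (exp (-N * (|a - b| + |b|))) =
      ENNReal.ofReal (exp (-N * a)) * ENNReal.ofReal (1 / (2 * N)) := by
    have hexp := lintegral_exp_neg_mul_Ioi (by positivity : 0 < 2 * N) a
    have hfactor : exp (-N * a) * (1 / (2 * N)) = exp (N * a) * (exp (-(2 * N) * a) / (2 * N)) := by
      rw [mul_one_div, ← mul_div_assoc, ← exp_add]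
      ring_nf
    rw [← ENNReal.ofReal_mul (exp_nonneg _), hfactor, ENNReal.ofReal_mul (exp_nonneg _), ← hexp,
      ← lintegral_const_mul' _ _ ENNReal.ofReal_ne_top]
    refine setLIntegral_congr_fun measurableSet_Ioi fun b (hb : a < b) => ?_
    rw [← ENNReal.ofReal_mul (exp_nonneg _), ← exp_add, abs_of_nonneg (ha.trans hb.le),
      abs_of_neg (sub_neg.2 hb)]
    ring_nf
  rw [← lintegral_add_compl _ (measurableSet_Iic (a := (0 : ℝ))), compl_Iic,
    ← Ioc_union_Ioi_eq_Ioi ha, lintegral_union measurableSet_Ioi Ioc_disjoint_Ioi_same,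
    hleft, hmid, hright, abs_of_nonneg ha, ENNReal.ofReal_mul (exp_nonneg _), ← mul_add, ← mul_add,
    ← ENNReal.ofReal_add ha (by positivity), ← ENNReal.ofReal_add (by positivity) (by positivity)]
  congr 2
  field_simp
  ring

theorem lintegral_exp_neg_mul_mul_add_Ioi (hN : 0 < N) {d : ℝ} (hd : 0 ≤ d) :
    ∫⁻ a in Ioi 0, ENNReal.ofReal (exp (-N * a) * (a + d)) =
      ENNReal.ofReal (1 / N ^ 2 + d / N) := by
  rw [lintegral_Ioi_of_hasDerivAt_of_nonneg
    (g := fun a => -(exp (-N * a) * (a / N + (1 / N ^ 2 + d / N)))) (l := 0) ?_ ?_ ?_]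
  · simp
  · intro a _
    have hexp : HasDerivAt (fun a => exp (-N * a)) (exp (-N * a) * (-N * 1)) a :=
      ((hasDerivAt_id a).const_mul (-N)).exp
    refine (hexp.mul (((hasDerivAt_id a).div_const N).add_const _)).neg.congr_deriv ?_
    simp only [id]
    field_simp
    ring
  · exact fun a ha => mul_nonneg (exp_nonneg _) (add_nonneg (le_of_lt ha) hd)
  · have h₀ := tendsto_rpow_mul_exp_neg_mul_atTop_nhds_zero 0 N hN
    have h₁ := tendsto_rpow_mul_exp_neg_mul_atTop_nhds_zero 1 N hN
    have hlim := ((h₁.mul_const (1 / N)).add (h₀.mul_const (1 / N ^ 2 + d / N))).neg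
    simp only [rpow_one, rpow_zero, zero_mul, add_zero, neg_zero] at hlim
    refine hlim.congr fun a => ?_
    ring

theorem lintegral_exp_neg_mul_triangle (hN : 0 < N) (c : ℝ) :
    ∫⁻ a : ℝ, ∫⁻ b : ℝ, ENNReal.ofReal (exp (-N * (|c - a| + |a - b| + |c - b|))) =
      ENNReal.ofReal (3 / (2 * N ^ 2)) := by
  have hinner (a : ℝ) :
      ∫⁻ b : ℝ, ENNReal.ofReal (exp (-N * (|c - (c + a)| + |c + a - b| + |c - b|))) =
        ENNReal.ofReal (exp (-(2 * N) * |a|) * (|a| + 1 / N)) := by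
    rw [← lintegral_add_left_eq_self _ c]
    simp_rw [sub_add_cancel_left, add_sub_add_left_eq_sub, abs_neg, add_assoc, mul_add (-N) |a|,
      exp_add, ENNReal.ofReal_mul (exp_nonneg (-N * |a|))]
    rw [lintegral_const_mul' _ _ ENNReal.ofReal_ne_top, lintegral_exp_neg_mul_abs_sub_add_abs hN,
      ← ENNReal.ofReal_mul (exp_nonneg _), ← mul_assoc, ← exp_add]
    ring_nf
  rw [← lintegral_add_left_eq_self _ c]
  simp_rw [hinner]
  rw [lintegral_comp_abs fun a => ENNReal.ofReal (exp (-(2 * N) * a) * (a + 1 / N)),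
    lintegral_exp_neg_mul_mul_add_Ioi (by positivity) (by positivity), ← ENNReal.ofReal_ofNat,
    ← ENNReal.ofReal_mul (by positivity)]
  congr 1
  field_simp
  ring

end ExpTriangle

section LogPolar

theorem lintegral_Ioi_eq_lintegral_exp (g : ℝ → ℝ≥0∞) :
    ∫⁻ r in Ioi 0, g r = ∫⁻ a : ℝ, ENNReal.ofReal (exp a) * g (exp a) := by
  rw [← range_exp, ← image_univ, lintegral_image_eq_lintegral_abs_deriv_mul .univ
    (fun a _ => (hasDerivAt_exp a).hasDerivWithinAt) exp_injective.injOn, setLIntegral_univ]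
  simp_rw [abs_exp]

variable {F : Type*} [NormedAddCommGroup F] [NormedSpace ℝ F] [FiniteDimensional ℝ F]
  [Nontrivial F] [MeasurableSpace F] [BorelSpace F]

theorem lintegral_eq_lintegral_toSphere (μ : Measure F) [μ.IsAddHaarMeasure] {f : F → ℝ≥0∞}
    (hf : Measurable f) :
    ∫⁻ x, f x ∂μ = ∫⁻ r in Ioi (0 : ℝ), ENNReal.ofReal (r ^ (finrank ℝ F - 1)) *
      ∫⁻ ω : Metric.sphere (0 : F) 1, f (r • (ω : F)) ∂μ.toSphere := by
  have hpolar := μ.measurePreserving_homeomorphUnitSphereProd.symm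
    (homeomorphUnitSphereProd F).toMeasurableEquiv
  have hmeas : Measurable fun u : Metric.sphere (0 : F) 1 × ℝ => f (u.2 • (u.1 : F)) := by
    fun_prop
  calc ∫⁻ x, f x ∂μ
      = ∫⁻ x : ({0}ᶜ : Set F), f x ∂μ.comap (↑) := by
        rw [lintegral_subtype_comap (measurableSet_singleton _).compl, restrict_compl_singleton]
    _ = ∫⁻ u : Metric.sphere (0 : F) 1 × Ioi (0 : ℝ), f (u.2.1 • (u.1 : F))
          ∂μ.toSphere.prod (.volumeIoiPow (finrank ℝ F - 1)) :=
        (hpolar.lintegral_comp_emb (MeasurableEquiv.measurableEmbedding _) _).symm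
    _ = ∫⁻ r : Ioi (0 : ℝ), ∫⁻ ω : Metric.sphere (0 : F) 1, f (r.1 • (ω : F)) ∂μ.toSphere
          ∂.volumeIoiPow (finrank ℝ F - 1) :=
        lintegral_prod_symm _ (by fun_prop)
    _ = ∫⁻ r : Ioi (0 : ℝ), ENNReal.ofReal (r.1 ^ (finrank ℝ F - 1)) *
          ∫⁻ ω : Metric.sphere (0 : F) 1, f (r.1 • (ω : F)) ∂μ.toSphere
          ∂volume.comap Subtype.val :=
        lintegral_withDensity_eq_lintegral_mul (f := fun r : Ioi (0 : ℝ) =>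
          ENNReal.ofReal (r.1 ^ (finrank ℝ F - 1))) _ (by fun_prop)
          (hmeas.lintegral_prod_left'.comp measurable_subtype_coe)
    _ = _ := lintegral_subtype_comap measurableSet_Ioi fun r : ℝ =>
        ENNReal.ofReal (r ^ (finrank ℝ F - 1)) *
          ∫⁻ ω : Metric.sphere (0 : F) 1, f (r • (ω : F)) ∂μ.toSphere

theorem lintegral_eq_lintegral_exp_toSphere (μ : Measure F) [μ.IsAddHaarMeasure] {f : F → ℝ≥0∞}
    (hf : Measurable f) :
    ∫⁻ x, f x ∂μ = ∫⁻ a : ℝ, ∫⁻ ω : Metric.sphere (0 : F) 1,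
      ENNReal.ofReal (exp (finrank ℝ F * a)) * f (exp a • (ω : F)) ∂μ.toSphere := by
  rw [lintegral_eq_lintegral_toSphere μ hf, lintegral_Ioi_eq_lintegral_exp]
  refine lintegral_congr fun a => ?_
  rw [lintegral_const_mul _ (by fun_prop), ← mul_assoc, ← ENNReal.ofReal_mul (exp_nonneg a),
    mul_pow_sub_one finrank_pos.ne', exp_nat_mul]

theorem lintegral_lintegral_eq_lintegral_exp_toSphere (μ : Measure F) [μ.IsAddHaarMeasure]
    {f : F × F → ℝ≥0∞} (hf : Measurable f) :
    ∫⁻ x, ∫⁻ y, f (x, y) ∂μ ∂μ = ∫⁻ a : ℝ, ∫⁻ b : ℝ, ∫⁻ ω : Metric.sphere (0 : F) 1,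
      ∫⁻ η : Metric.sphere (0 : F) 1, ENNReal.ofReal (exp (finrank ℝ F * a)) *
        (ENNReal.ofReal (exp (finrank ℝ F * b)) * f (exp a • (ω : F), exp b • (η : F)))
        ∂μ.toSphere ∂μ.toSphere := by
  have hmeas : Measurable fun u : (ℝ × Metric.sphere (0 : F) 1 × ℝ) × Metric.sphere (0 : F) 1 =>
      ENNReal.ofReal (exp (finrank ℝ F * u.1.1)) * (ENNReal.ofReal (exp (finrank ℝ F * u.1.2.2)) *
        f (exp u.1.1 • (u.1.2.1 : F), exp u.1.2.2 • (u.2 : F))) := by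
    fun_prop
  rw [lintegral_eq_lintegral_exp_toSphere μ hf.lintegral_prod_right']
  refine lintegral_congr fun a => ?_
  refine Eq.trans (lintegral_congr fun ω => ?_) (lintegral_lintegral_swap
    (hmeas.lintegral_prod_right'.comp (measurable_prodMk_left (x := a))).aemeasurable)
  simp_rw [lintegral_const_mul' _ _ ENNReal.ofReal_ne_top]
  rw [lintegral_eq_lintegral_exp_toSphere μ (f := fun y => f (exp a • (ω : F), y)) (by fun_prop)]
  simp_rw [lintegral_const_mul' _ _ ENNReal.ofReal_ne_top]

end LogPolar

section ExpSeries

theorem ofReal_re_riemannZeta_three : ((riemannZeta 3).re : ℂ) = riemannZeta 3 :=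
  Complex.conj_eq_iff_re.1 (by rw [← riemannZeta_conj, Complex.conj_ofNat])

theorem hasSum_re_riemannZeta_three :
    HasSum (fun n : ℕ => 1 / ((n : ℝ) + 1) ^ 3) (riemannZeta 3).re := by
  have hsum : Summable fun n : ℕ => 1 / ((n : ℝ) + 1) ^ 3 := by
    exact_mod_cast (summable_nat_add_iff 1).2 (summable_one_div_nat_pow.2 (by norm_num : 1 < 3))
  rw [← Complex.hasSum_ofReal, ofReal_re_riemannZeta_three,
    zeta_eq_tsum_one_div_nat_add_one_cpow (by norm_num)]
  convert (Complex.hasSum_ofReal.2 hsum.hasSum).summable.hasSum using 4 with n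
  push_cast
  rw [Complex.cpow_ofNat]

theorem lintegral_tsum_exp_neg_triangle (c : ℝ) :
    ∫⁻ a : ℝ, ∫⁻ b : ℝ, ∑' n : ℕ,
        ENNReal.ofReal (exp (-((n : ℝ) + 1) * (|c - a| + |a - b| + |c - b|)) / (n + 1)) =
      ENNReal.ofReal (3 / 2 * (riemannZeta 3).re) := by
  have hterm (n : ℕ) : ∫⁻ a : ℝ, ∫⁻ b : ℝ,
        ENNReal.ofReal (exp (-((n : ℝ) + 1) * (|c - a| + |a - b| + |c - b|)) / (n + 1)) =
      ENNReal.ofReal (3 / 2 * (1 / ((n : ℝ) + 1) ^ 3)) := by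
    simp_rw [div_eq_mul_inv (exp _), ENNReal.ofReal_mul (exp_nonneg _),
      lintegral_mul_const' _ _ ENNReal.ofReal_ne_top]
    rw [lintegral_exp_neg_mul_triangle n.cast_add_one_pos, ← ENNReal.ofReal_mul (by positivity)]
    congr 1
    field_simp
  have hmeas (n : ℕ) : Measurable fun z : ℝ × ℝ =>
      ENNReal.ofReal (exp (-((n : ℝ) + 1) * (|c - z.1| + |z.1 - z.2| + |c - z.2|)) / (n + 1)) := by
    fun_prop
  have hinner (a : ℝ) : ∫⁻ b : ℝ, ∑' n : ℕ,
        ENNReal.ofReal (exp (-((n : ℝ) + 1) * (|c - a| + |a - b| + |c - b|)) / (n + 1)) =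
      ∑' n : ℕ, ∫⁻ b : ℝ,
        ENNReal.ofReal (exp (-((n : ℝ) + 1) * (|c - a| + |a - b| + |c - b|)) / (n + 1)) :=
    lintegral_tsum fun n => ((hmeas n).comp measurable_prodMk_left).aemeasurable
  simp_rw [hinner]
  rw [lintegral_tsum fun n => (hmeas n).lintegral_prod_right'.aemeasurable]
  simp only [hterm]
  have hsum := hasSum_re_riemannZeta_three.mul_left (3 / 2)
  rw [← ENNReal.ofReal_tsum_of_nonneg (fun n => by positivity) hsum.summable, hsum.tsum_eq]

theorem tsum_ofReal_exp_neg_mul_div {s : ℝ} (hs : 0 < s) :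
    ∑' n : ℕ, ENNReal.ofReal (exp (-((n : ℝ) + 1) * s) / (n + 1)) =
      ENNReal.ofReal (exp (-s) * ∑' n : ℕ, exp (-s) ^ n / (n + 1)) := by
  have hterm (n : ℕ) : exp (-((n : ℝ) + 1) * s) / (n + 1) =
      exp (-s) * (exp (-s) ^ n / (n + 1)) := by
    rw [← mul_div_assoc, ← exp_nat_mul, ← exp_add]
    ring_nf
  have hsum : Summable fun n : ℕ => exp (-s) ^ n / ((n : ℝ) + 1) :=
    Summable.of_nonneg_of_le (fun n => by positivity)
      (fun n => div_le_self (by positivity) (by simp))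
      (summable_geometric_of_lt_one (exp_nonneg _) (exp_lt_one_iff.2 (neg_lt_zero.2 hs)))
  simp_rw [hterm]
  rw [← ENNReal.ofReal_tsum_of_nonneg (fun n => by positivity) (hsum.mul_left _), tsum_mul_left]

end ExpSeries

section Propagator

variable {E : Type*} [NormedAddCommGroup E]

/-- The propagator of a massless scalar field in four dimensions, `‖x - y‖⁻²` up to normalisation:
the weight of an edge joining `x` to `y`. It has the junk value `0` on the diagonal. -/
noncomputable def propagator (x y : E) : ℝ := (‖x - y‖ ^ 2)⁻¹

theorem propagator_nonneg (x y : E) : 0 ≤ propagator x y := by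
  unfold propagator
  positivity

theorem propagator_pos {x y : E} (h : x ≠ y) : 0 < propagator x y := by
  have := norm_pos_iff.2 (sub_ne_zero.2 h)
  unfold propagator
  positivity

theorem propagator_add_right_cancel (x y z : E) :
    propagator (x + z) (y + z) = propagator x y := by
  rw [propagator, propagator, add_sub_add_right_eq_sub]

@[fun_prop]
theorem measurable_propagator [MeasurableSpace E] [BorelSpace E] [SecondCountableTopology E]
    {α : Type*} [MeasurableSpace α] {f g : α → E} (hf : Measurable f) (hg : Measurable g) :
    Measurable fun x => propagator (f x) (g x) := by
  unfold propagator
  fun_prop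

variable [InnerProductSpace ℝ E]

theorem propagator_zero_exp_smul (a : ℝ) {ω : E} (hω : ‖ω‖ = 1) :
    propagator 0 (exp a • ω) = exp (-(2 * a)) := by
  rw [propagator, zero_sub, norm_neg, norm_smul, hω, norm_eq_abs, abs_exp, mul_one, ← exp_nat_mul,
    ← exp_neg, Nat.cast_ofNat]

theorem abs_exp_neg_abs_sub_lt_one {a b : ℝ} (hab : a ≠ b) : |exp (-|a - b|)| < 1 := by
  rw [abs_exp, exp_lt_one_iff, neg_lt_zero, abs_pos]
  exact sub_ne_zero.2 hab

theorem propagator_exp_smul_exp_smul {a b : ℝ} (hab : a ≠ b) {ω η : E} (hω : ‖ω‖ = 1)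
    (hη : ‖η‖ = 1) :
    propagator (exp a • ω) (exp b • η) =
      exp (-(a + b)) * exp (-|a - b|) * zonal (exp (-|a - b|) ^ ·) ⟪ω, η⟫ := by
  have hcosh : exp (a - b) + exp (b - a) = exp |a - b| + exp (-|a - b|) := by
    have := cosh_abs (a - b)
    rw [cosh_eq, cosh_eq, neg_sub] at this
    linarith
  have hnorm : ‖exp a • ω - exp b • η‖ ^ 2 = exp (a + b) * exp |a - b| *
      (1 - 2 * exp (-|a - b|) * ⟪ω, η⟫ + exp (-|a - b|) ^ 2) := by
    have hk : exp |a - b| * exp (-|a - b|) = 1 := by rw [← exp_add, add_neg_cancel, exp_zero]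
    have ha : exp (a + b) * exp (a - b) = exp a ^ 2 := by rw [← exp_add, ← exp_nat_mul]; ring_nf
    have hb : exp (a + b) * exp (b - a) = exp b ^ 2 := by rw [← exp_add, ← exp_nat_mul]; ring_nf
    rw [norm_sub_sq_real, norm_smul, norm_smul, inner_smul_left, inner_smul_right, hω, hη,
      norm_eq_abs, norm_eq_abs, abs_exp, abs_exp, mul_one, mul_one, ← ha, ← hb,
      RCLike.conj_to_real, ← mul_assoc (exp a) (exp b), ← exp_add a b]
    linear_combination exp (a + b) * hcosh +
      exp (a + b) * (2 * ⟪ω, η⟫ - exp (-|a - b|)) * hk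
  rw [zonal_pow (abs_exp_neg_abs_sub_lt_one hab) (abs_inner_le_one hω hη), propagator, hnorm,
    mul_inv, mul_inv, exp_neg, exp_neg]

end Propagator

section TwoPoint

variable {E : Type*} [NormedAddCommGroup E] [InnerProductSpace ℝ E]

/-- The integrand of the two-loop two-point function with external vertices `u` and `v`: the
product of the propagators over all edges of the complete graph on `u`, `v`, `x`, `y` except the
one joining `u` to `v`. -/
noncomputable def twoPointIntegrand (u v x y : E) : ℝ :=
  propagator u x * propagator u y * (propagator v x * (propagator x y * propagator v y))

theorem twoPointIntegrand_exp_smul {a b c : ℝ} (hca : c ≠ a) (hab : a ≠ b) (hcb : c ≠ b)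
    {p ω η : E} (hp : ‖p‖ = 1) (hω : ‖ω‖ = 1) (hη : ‖η‖ = 1) :
    exp (4 * a) * (exp (4 * b) *
        twoPointIntegrand 0 (exp c • p) (exp a • ω) (exp b • η)) =
      exp (-(2 * c)) * exp (-(|c - a| + |a - b| + |c - b|)) *
        (zonal (exp (-|c - a|) ^ ·) ⟪p, ω⟫ *
          (zonal (exp (-|a - b|) ^ ·) ⟪ω, η⟫ * zonal (exp (-|c - b|) ^ ·) ⟪p, η⟫)) := by
  have hexp : exp (4 * a) * exp (4 * b) * exp (-(2 * a)) * exp (-(2 * b)) *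
      exp (-(c + a)) * exp (-(a + b)) * exp (-(c + b)) = exp (-(2 * c)) := by
    simp only [← exp_add]
    ring_nf
  have htriangle : exp (-(|c - a| + |a - b| + |c - b|)) =
      exp (-|c - a|) * exp (-|a - b|) * exp (-|c - b|) := by
    simp only [← exp_add]
    ring_nf
  rw [twoPointIntegrand, propagator_zero_exp_smul a hω, propagator_zero_exp_smul b hη,
    propagator_exp_smul_exp_smul hca hp hω, propagator_exp_smul_exp_smul hab hω hη,
    propagator_exp_smul_exp_smul hcb hp hη, htriangle, ← hexp]
  ac_rfl

variable [FiniteDimensional ℝ E] [MeasurableSpace E] [BorelSpace E]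

theorem lintegral_twoPointIntegrand_exp_smul (hE : finrank ℝ E = 4) {a b c : ℝ} (hca : c ≠ a)
    (hab : a ≠ b) (hcb : c ≠ b) {p : E} (hp : ‖p‖ = 1) :
    ∫⁻ ω : Metric.sphere (0 : E) 1, ∫⁻ η : Metric.sphere (0 : E) 1,
        ENNReal.ofReal (exp (4 * a)) * (ENNReal.ofReal (exp (4 * b)) *
          ENNReal.ofReal (twoPointIntegrand 0 (exp c • p) (exp a • (ω : E)) (exp b • (η : E))))
        ∂(volume : Measure E).toSphere ∂(volume : Measure E).toSphere =
      ENNReal.ofReal (4 * π ^ 4 * exp (-(2 * c))) * ∑' n : ℕ,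
        ENNReal.ofReal (exp (-((n : ℝ) + 1) * (|c - a| + |a - b| + |c - b|)) / (n + 1)) := by
  set s := |c - a| + |a - b| + |c - b| with hs
  have hs0 : 0 < s := by have := abs_pos.2 (sub_ne_zero.2 hab); positivity
  have hr : exp (-|c - a|) * exp (-|a - b|) * exp (-|c - b|) = exp (-s) := by
    rw [hs, ← exp_add, ← exp_add]
    ring_nf
  have hpoint (ω η : Metric.sphere (0 : E) 1) :
      ENNReal.ofReal (exp (4 * a)) * (ENNReal.ofReal (exp (4 * b)) *
          ENNReal.ofReal (twoPointIntegrand 0 (exp c • p) (exp a • (ω : E)) (exp b • (η : E)))) =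
        ENNReal.ofReal (exp (-(2 * c)) * exp (-s)) * ENNReal.ofReal
          (zonal (exp (-|c - a|) ^ ·) ⟪p, (ω : E)⟫ *
            (zonal (exp (-|a - b|) ^ ·) ⟪(ω : E), (η : E)⟫ *
              zonal (exp (-|c - b|) ^ ·) ⟪p, (η : E)⟫)) := by
    rw [← ENNReal.ofReal_mul (by positivity), ← ENNReal.ofReal_mul (by positivity),
      ← ENNReal.ofReal_mul (by positivity), twoPointIntegrand_exp_smul hca hab hcb hp
      (norm_eq_of_mem_sphere ω) (norm_eq_of_mem_sphere η)]
  simp_rw [hpoint, lintegral_const_mul' _ _ ENNReal.ofReal_ne_top]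
  rw [lintegral_zonal_pow_triangle hE (abs_exp_neg_abs_sub_lt_one hca)
    (abs_exp_neg_abs_sub_lt_one hab) (abs_exp_neg_abs_sub_lt_one hcb) hp, hr,
    tsum_ofReal_exp_neg_mul_div hs0, ← ENNReal.ofReal_mul (by positivity),
    ← ENNReal.ofReal_mul (by positivity)]
  ring_nf

theorem lintegral_twoPointIntegrand_zero (hE : finrank ℝ E = 4) {v : E} (hv : v ≠ 0) :
    ∫⁻ x : E, ∫⁻ y : E, ENNReal.ofReal (twoPointIntegrand 0 v x y) =
      ENNReal.ofReal (6 * π ^ 4 * (riemannZeta 3).re * propagator 0 v) := by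
  have : Nontrivial E := nontrivial_of_ne v 0 hv
  have hv' : 0 < ‖v‖ := norm_pos_iff.2 hv
  obtain ⟨c, p, hp, rfl⟩ : ∃ (c : ℝ) (p : E), ‖p‖ = 1 ∧ exp c • p = v :=
    ⟨log ‖v‖, ‖v‖⁻¹ • v, norm_smul_inv_norm hv, by rw [exp_log hv', smul_inv_smul₀ hv'.ne']⟩
  have hmeas : Measurable fun z : E × E =>
      ENNReal.ofReal (twoPointIntegrand 0 (exp c • p) z.1 z.2) := by
    unfold twoPointIntegrand
    fun_prop
  rw [lintegral_lintegral_eq_lintegral_exp_toSphere volume hmeas, hE]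
  have hae : ∀ᵐ a : ℝ, ∀ᵐ b : ℝ, c ≠ a ∧ a ≠ b ∧ c ≠ b := by
    filter_upwards [Measure.ae_ne volume c] with a ha
    filter_upwards [Measure.ae_ne volume a, Measure.ae_ne volume c] with b hba hbc
    exact ⟨ha.symm, hba.symm, hbc.symm⟩
  calc _ = ∫⁻ a : ℝ, ∫⁻ b : ℝ, ENNReal.ofReal (4 * π ^ 4 * exp (-(2 * c))) * ∑' n : ℕ,
        ENNReal.ofReal (exp (-((n : ℝ) + 1) * (|c - a| + |a - b| + |c - b|)) / (n + 1)) :=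
        lintegral_congr_ae <| hae.mono fun a ha => lintegral_congr_ae <| ha.mono fun b hb =>
          lintegral_twoPointIntegrand_exp_smul hE hb.1 hb.2.1 hb.2.2 hp
    _ = _ := by
        simp_rw [lintegral_const_mul' _ _ ENNReal.ofReal_ne_top]
        rw [lintegral_tsum_exp_neg_triangle, ← ENNReal.ofReal_mul (by positivity),
          propagator_zero_exp_smul c hp]
        ring_nf

theorem lintegral_twoPointIntegrand (hE : finrank ℝ E = 4) {u v : E} (huv : u ≠ v) :
    ∫⁻ x : E, ∫⁻ y : E, ENNReal.ofReal (twoPointIntegrand u v x y) =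
      ENNReal.ofReal (6 * π ^ 4 * (riemannZeta 3).re * propagator u v) := by
  have htrans (x y : E) : twoPointIntegrand u v (x + u) (y + u) =
      twoPointIntegrand 0 (v - u) x y := by
    have hv (z : E) : propagator v (z + u) = propagator (v - u) z := by
      rw [← propagator_add_right_cancel _ z u, sub_add_cancel]
    have hu (z : E) : propagator u (z + u) = propagator 0 z := by
      rw [← propagator_add_right_cancel 0 z u, zero_add]
    simp only [twoPointIntegrand, hu, hv, propagator_add_right_cancel]
  calc _ = ∫⁻ x : E, ∫⁻ y : E, ENNReal.ofReal (twoPointIntegrand u v (x + u) (y + u)) := by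
        rw [← lintegral_add_right_eq_self _ u]
        exact lintegral_congr fun x => (lintegral_add_right_eq_self _ u).symm
    _ = _ := by
        simp_rw [htrans]
        rw [lintegral_twoPointIntegrand_zero hE (sub_ne_zero.2 huv.symm),
          ← propagator_add_right_cancel 0 _ u, zero_add, sub_add_cancel]

end TwoPoint

section Inversion

open EuclideanGeometry

variable {E : Type*} [NormedAddCommGroup E]

/-- The product of the propagators over all edges of the complete graph on `a`, `b`, `c`, `x`, `y`
except those joining two of the external vertices `a`, `b`, `c`. -/
noncomputable def threePointIntegrand (a b c x y : E) : ℝ :=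
  propagator a x * propagator a y * twoPointIntegrand b c x y

theorem measurable_threePointIntegrand [MeasurableSpace E] [BorelSpace E]
    [SecondCountableTopology E] (a b c : E) :
    Measurable fun x : E × E => threePointIntegrand a b c x.1 x.2 := by
  unfold threePointIntegrand twoPointIntegrand
  fun_prop

theorem threePointIntegrand_nonneg (a b c x y : E) : 0 ≤ threePointIntegrand a b c x y := by
  unfold threePointIntegrand twoPointIntegrand propagator
  positivity

variable [InnerProductSpace ℝ E]

theorem abs_det_smul_reflection [FiniteDimensional ℝ E] (r : ℝ) (K : Submodule ℝ E) :
    |(r • (K.reflection : E →L[ℝ] E)).det| = |r| ^ finrank ℝ E := by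
  rw [ContinuousLinearMap.det, ContinuousLinearMap.toLinearMap_smul, LinearMap.det_smul, abs_mul,
    abs_pow]
  refine mul_right_eq_self₀.2 (.inl ?_)
  exact (congrArg abs K.det_reflection).trans (by simp)

theorem lintegral_eq_lintegral_inversion [FiniteDimensional ℝ E] [Nontrivial E] [MeasurableSpace E]
    [BorelSpace E] (c : E) {R : ℝ} (hR : R ≠ 0) (f : E → ℝ≥0∞) :
    ∫⁻ x, f x = ∫⁻ x, ENNReal.ofReal ((R / dist x c) ^ (2 * finrank ℝ E)) *
      f (inversion c R x) := by
  have himage : inversion c R '' {c}ᶜ = {c}ᶜ := by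
    rw [image_compl_eq (inversion_bijective c hR), image_singleton, inversion_self]
  rw [← restrict_compl_singleton (μ := volume) c, ← himage,
    lintegral_image_eq_lintegral_abs_det_fderiv_mul volume (measurableSet_singleton c).compl
      (fun x hx => (hasFDerivAt_inversion hx).hasFDerivWithinAt) (inversion_injective c hR).injOn,
    himage, restrict_compl_singleton]
  simp_rw [abs_det_smul_reflection, abs_sq, ← pow_mul]

theorem propagator_inversion_self (a x : E) :
    propagator a (inversion a 1 x) = (propagator a x)⁻¹ := by
  rw [propagator, propagator, ← dist_eq_norm, ← dist_eq_norm, dist_center_inversion]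
  simp

theorem propagator_inversion_inversion {a x y : E} (hx : x ≠ a) (hy : y ≠ a) :
    propagator (inversion a 1 x) (inversion a 1 y) =
      propagator x y / (propagator a x * propagator a y) := by
  simp only [propagator, ← dist_eq_norm, dist_inversion_inversion hx hy, dist_comm a]
  field_simp

theorem propagator_inversion_right {a b x : E} (hb : b ≠ a) (hx : x ≠ a) :
    propagator b (inversion a 1 x) =
      propagator a b / propagator a x * propagator (inversion a 1 b) x := by
  have hb' : inversion a 1 b ≠ a := (inversion_eq_center one_ne_zero).not.2 hb
  conv_lhs => rw [← inversion_inversion a one_ne_zero b]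
  rw [propagator_inversion_inversion hb' hx, propagator_inversion_self]
  field_simp

theorem threePointIntegrand_inversion {a b c x y : E} (hb : b ≠ a) (hc : c ≠ a) (hx : x ≠ a)
    (hy : y ≠ a) :
    propagator a x ^ 4 * (propagator a y ^ 4 *
        threePointIntegrand a b c (inversion a 1 x) (inversion a 1 y)) =
      (propagator a b * propagator a c) ^ 2 *
        twoPointIntegrand (inversion a 1 b) (inversion a 1 c) x y := by
  have hx' := (propagator_pos hx.symm).ne'
  have hy' := (propagator_pos hy.symm).ne'
  simp only [threePointIntegrand, twoPointIntegrand, propagator_inversion_self,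
    propagator_inversion_inversion hx hy, propagator_inversion_right hb hx,
    propagator_inversion_right hb hy, propagator_inversion_right hc hx,
    propagator_inversion_right hc hy]
  field_simp

theorem lintegral_threePointIntegrand [FiniteDimensional ℝ E] [MeasurableSpace E] [BorelSpace E]
    (hE : finrank ℝ E = 4) {a b c : E} (hab : a ≠ b) (hac : a ≠ c) (hbc : b ≠ c) :
    ∫⁻ x : E, ∫⁻ y : E, ENNReal.ofReal (threePointIntegrand a b c x y) = ENNReal.ofReal
      (6 * π ^ 4 * (riemannZeta 3).re * (propagator a b * propagator a c * propagator b c)) := by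
  have : Nontrivial E := nontrivial_of_ne a b hab
  have hinv (f : E → ℝ≥0∞) : ∫⁻ x, f x =
      ∫⁻ x, ENNReal.ofReal (propagator a x ^ 4) * f (inversion a 1 x) := by
    rw [lintegral_eq_lintegral_inversion a one_ne_zero, hE]
    simp only [propagator, ← dist_eq_norm, dist_comm a, one_div, inv_pow, ← pow_mul]
  have hpoint {x y : E} (hx : x ≠ a) (hy : y ≠ a) :
      ENNReal.ofReal (propagator a x ^ 4) * (ENNReal.ofReal (propagator a y ^ 4) *
        ENNReal.ofReal (threePointIntegrand a b c (inversion a 1 x) (inversion a 1 y))) =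
      ENNReal.ofReal ((propagator a b * propagator a c) ^ 2) *
        ENNReal.ofReal (twoPointIntegrand (inversion a 1 b) (inversion a 1 c) x y) := by
    rw [← ENNReal.ofReal_mul (by positivity), ← ENNReal.ofReal_mul (by positivity),
      ← ENNReal.ofReal_mul (by positivity), threePointIntegrand_inversion hab.symm hac.symm hx hy]
  have hne : ∀ᵐ x : E, x ≠ a := Measure.ae_ne volume a
  calc _ = ∫⁻ x : E, ∫⁻ y : E,
        ENNReal.ofReal (propagator a x ^ 4) * (ENNReal.ofReal (propagator a y ^ 4) *
          ENNReal.ofReal (threePointIntegrand a b c (inversion a 1 x) (inversion a 1 y))) := by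
        rw [hinv]
        simp_rw [hinv fun y => ENNReal.ofReal (threePointIntegrand a b c _ y),
          lintegral_const_mul' _ _ ENNReal.ofReal_ne_top]
    _ = ∫⁻ x : E, ∫⁻ y : E, ENNReal.ofReal ((propagator a b * propagator a c) ^ 2) *
          ENNReal.ofReal (twoPointIntegrand (inversion a 1 b) (inversion a 1 c) x y) :=
        lintegral_congr_ae <| hne.mono fun x hx => lintegral_congr_ae <| hne.mono fun y hy =>
          hpoint hx hy
    _ = _ := by
        simp_rw [lintegral_const_mul' _ _ ENNReal.ofReal_ne_top]
        rw [lintegral_twoPointIntegrand hE ((inversion_injective a one_ne_zero).ne hbc),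
          ← ENNReal.ofReal_mul (by positivity), propagator_inversion_inversion hab.symm hac.symm]
        have hab' := propagator_pos hab
        have hac' := propagator_pos hac
        congr 1
        field_simp

variable [FiniteDimensional ℝ E] [MeasurableSpace E] [BorelSpace E]

theorem lintegral_prod_threePointIntegrand (hE : finrank ℝ E = 4) {a b c : E} (hab : a ≠ b)
    (hac : a ≠ c) (hbc : b ≠ c) :
    ∫⁻ x : E × E, ENNReal.ofReal (threePointIntegrand a b c x.1 x.2) = ENNReal.ofReal
      (6 * π ^ 4 * (riemannZeta 3).re * (propagator a b * propagator a c * propagator b c)) :=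
  (lintegral_prod _ (measurable_threePointIntegrand a b c).ennreal_ofReal.aemeasurable).trans
    (lintegral_threePointIntegrand hE hab hac hbc)

theorem integrable_threePointIntegrand (hE : finrank ℝ E = 4) {a b c : E} (hab : a ≠ b)
    (hac : a ≠ c) (hbc : b ≠ c) :
    Integrable fun x : E × E => threePointIntegrand a b c x.1 x.2 := by
  have hnonneg : 0 ≤ᵐ[volume] fun x : E × E => threePointIntegrand a b c x.1 x.2 :=
    .of_forall fun x => threePointIntegrand_nonneg a b c x.1 x.2
  refine ⟨(measurable_threePointIntegrand a b c).aestronglyMeasurable, ?_⟩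
  rw [hasFiniteIntegral_iff_ofReal hnonneg, lintegral_prod_threePointIntegrand hE hab hac hbc]
  exact ENNReal.ofReal_lt_top

theorem integral_threePointIntegrand (hE : finrank ℝ E = 4) {a b c : E} (hab : a ≠ b)
    (hac : a ≠ c) (hbc : b ≠ c) :
    ∫ x : E × E, threePointIntegrand a b c x.1 x.2 =
      6 * π ^ 4 * (riemannZeta 3).re * (propagator a b * propagator a c * propagator b c) := by
  have hzeta : 0 ≤ (riemannZeta 3).re :=
    hasSum_re_riemannZeta_three.nonneg fun n => by positivity
  have hnonneg : 0 ≤ᵐ[volume] fun x : E × E => threePointIntegrand a b c x.1 x.2 :=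
    .of_forall fun x => threePointIntegrand_nonneg a b c x.1 x.2
  have hvalue : 0 ≤ propagator a b * propagator a c * propagator b c :=
    mul_nonneg (mul_nonneg (propagator_nonneg a b) (propagator_nonneg a c)) (propagator_nonneg b c)
  rw [integral_eq_lintegral_of_nonneg_ae hnonneg
      (measurable_threePointIntegrand a b c).aestronglyMeasurable,
    lintegral_prod_threePointIntegrand hE hab hac hbc, ENNReal.toReal_ofReal (by positivity)]

end Inversion

end GraphicalFunction

open GraphicalFunction Module in
theorem graphical_function_K5_two_internal_general {E : Type*} [NormedAddCommGroup E]
    [InnerProductSpace ℝ E] [FiniteDimensional ℝ E] [MeasurableSpace E] [BorelSpace E]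
    (hE : finrank ℝ E = 4) {a b c : E} (hab : a ≠ b) (hac : a ≠ c) (hbc : b ≠ c) :
    Integrable (fun x : E × E =>
      1 / (‖x.1 - a‖ ^ 2 * ‖x.1 - b‖ ^ 2 * ‖x.1 - c‖ ^ 2 * ‖x.1 - x.2‖ ^ 2 *
        ‖x.2 - a‖ ^ 2 * ‖x.2 - b‖ ^ 2 * ‖x.2 - c‖ ^ 2)) ∧
    (((1 / Real.pi ^ 4) * ∫ x : E × E,
        1 / (‖x.1 - a‖ ^ 2 * ‖x.1 - b‖ ^ 2 * ‖x.1 - c‖ ^ 2 * ‖x.1 - x.2‖ ^ 2 *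
          ‖x.2 - a‖ ^ 2 * ‖x.2 - b‖ ^ 2 * ‖x.2 - c‖ ^ 2) : ℝ) : ℂ)
      = 6 * riemannZeta 3 / ((‖a - b‖ : ℂ) ^ 2 * (‖c - a‖ : ℂ) ^ 2 * (‖c - b‖ : ℂ) ^ 2) := by
  have hterm (x : E × E) : 1 / (‖x.1 - a‖ ^ 2 * ‖x.1 - b‖ ^ 2 * ‖x.1 - c‖ ^ 2 * ‖x.1 - x.2‖ ^ 2 *
      ‖x.2 - a‖ ^ 2 * ‖x.2 - b‖ ^ 2 * ‖x.2 - c‖ ^ 2) = threePointIntegrand a b c x.1 x.2 := by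
    simp only [threePointIntegrand, twoPointIntegrand, propagator, norm_sub_rev a,
      norm_sub_rev b, norm_sub_rev c, one_div, mul_inv]
    ring
  simp_rw [hterm]
  refine ⟨integrable_threePointIntegrand hE hab hac hbc, ?_⟩
  rw [integral_threePointIntegrand hE hab hac hbc]
  simp only [propagator, norm_sub_rev _ c]
  push_cast
  rw [ofReal_re_riemannZeta_three]
  field_simp

/-- The graphical function of the complete graph on the three external vertices
`0, e, y` and two internal vertices, with all edges of weight 1, in four
dimensions: its value is `6ζ(3)/(‖y‖²‖y − e‖²)`. -/
theorem graphical_function_K5_two_internal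
    (e y : EuclideanSpace ℝ (Fin 4)) (he : ‖e‖ = 1) (hy0 : y ≠ 0) (hye : y ≠ e) :
    Integrable (fun x : EuclideanSpace ℝ (Fin 4) × EuclideanSpace ℝ (Fin 4) =>
      1 / (‖x.1‖ ^ 2 * ‖x.1 - e‖ ^ 2 * ‖x.1 - y‖ ^ 2 * ‖x.1 - x.2‖ ^ 2 *
        ‖x.2‖ ^ 2 * ‖x.2 - e‖ ^ 2 * ‖x.2 - y‖ ^ 2)) ∧
    (((1 / Real.pi ^ 4) * ∫ x : EuclideanSpace ℝ (Fin 4) × EuclideanSpace ℝ (Fin 4),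
        1 / (‖x.1‖ ^ 2 * ‖x.1 - e‖ ^ 2 * ‖x.1 - y‖ ^ 2 * ‖x.1 - x.2‖ ^ 2 *
          ‖x.2‖ ^ 2 * ‖x.2 - e‖ ^ 2 * ‖x.2 - y‖ ^ 2) : ℝ) : ℂ)
      = 6 * riemannZeta 3 / ((‖y‖ : ℂ) ^ 2 * (‖y - e‖ : ℂ) ^ 2) := by
  have he0 : 0 ≠ e := by rintro rfl; simp at he
  simpa [he] using graphical_function_K5_two_internal_general finrank_euclideanSpace_fin
    he0 hy0.symm hye.symm
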